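/- Fix a rational R ∈ (0,1), λ > 0 and ω with 0 < ω < min{λ(1−R), 2λR, 1}. Let p : ℕ → ℕ be a sequence of primes with p(n)/n^λ → 1, and restrict to n with n(1−R) ∈ ℕ. For each such n, let H be a random n(1−R) × n matrix with independent entries uniform on 𝔽_{p(n)}, and let s(n) ∈ 𝔽_{p(n)}^{n(1−R)} be any nonzero vector. Set ρ_eff(n) = √n · p(n)^{1−R}/√(2πe). Then, as n → ∞: (i) the probability that there exists x ∈ ℤⁿ with ‖x‖ ≤ ρ_eff(n)(1 − n^{−ω}) and Hx ≡ s(n) (mod p) tends to 0; (ii) the probability that there exists x ∈ ℤⁿ with ‖x‖ ≤ ρ_eff(n)(1 + n^{−ω}) and Hx ≡ s(n) (mod p) tends to 1. Consequently, with probability tending to 1, solutions of Hx ≡ s(n) (mod p) exist and every minimum-norm solution x satisfies ρ_eff(n)(1 − n^{−ω}) ≤ ‖x‖ ≤ ρ_eff(n)(1 + n^{−ω}). -/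

import Mathlib

/-!
The number of integer points in a ball of radius `r` lies between the volumes of the balls of
radii `r ± √n / 2` (unit cubes around the lattice points). By Stirling, the ball of radius
`ρ_eff` has volume `p ^ m` up to a polynomial factor in `n`, and changing the radius by the factor
`1 ± n ^ (-ω)` changes the volume by about `exp (± n ^ (1 - ω))`. The shift `√n / 2` is negligible
against `ρ_eff n ^ (-ω)` because `ω < λ (1 - R)`.

A fixed nonzero residue class solves `Hu = s` with probability `p ^ (-m)`, and the zero class never
does since `s ≠ 0`. For the smaller radius a union bound suffices (`prob_lower_radius`). For the
larger radius (`prob_upper_radius`) the second moment method is applied to the number of nonzero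
residue classes meeting the ball that solve the equation: two distinct classes are either linearly
independent, hence give independent events, or cannot both be solutions (`card_mulVec_two`). So a
solution exists with probability at least `μ / (1 + μ)`, where `μ` is `p ^ (-m)` times the number
of classes (`le_card_exists`).

It remains to compare the number of classes with the number of points, since the ball may contain
several points of one class when `r` exceeds `p / 2`. Two such points differ by `p z` with
`‖z‖² ≤ 4 r² / p² = O(n ^ (1 - 2 λ R))`, and there are at most `(2 n + 1) ^ L` integer vectors with
`‖z‖² ≤ L` (`ncard_le_residues`). As `ω < 2 λ R`, this multiplicity is also negligible against
`exp (n ^ (1 - ω))`, and `μ → ∞`. The claim about minimum-norm solutions follows by combining the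
two events.
-/

open Filter

/-- Euclidean norm of an integer vector. -/
noncomputable def intNorm {n : ℕ} (x : Fin n → ℤ) : ℝ :=
  Real.sqrt (∑ i, ((x i : ℝ)) ^ 2)

/-- Asymptotic effective radius `√n · p^{1−R} / √(2πe)`. -/
noncomputable def rhoEff (p n : ℕ) (R : ℝ) : ℝ :=
  Real.sqrt n * (p : ℝ) ^ ((1 : ℝ) - R) / Real.sqrt (2 * Real.pi * Real.exp 1)

/-! ### Counting matrices over a finite field -/

lemma card_fiber_mul {G K : Type*} [AddCommGroup G] [AddCommGroup K] [Fintype G] [Fintype K]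
    [DecidableEq K] (f : G →+ K) (hf : Function.Surjective f) (b : K) :
    (Finset.univ.filter (fun g => f g = b)).card * Fintype.card K = Fintype.card G := by
  classical
  have h := Finset.card_eq_sum_card_fiberwise (s := (Finset.univ : Finset G))
    (t := (Finset.univ : Finset K)) (f := f) (fun _ _ => by simp)
  rw [Finset.card_univ] at h
  rw [h, Finset.sum_congr rfl (fun c _ => AddMonoidHom.card_fiber_eq_of_mem_range f (hf c) (hf b))]
  simp [mul_comm]

/-- Evaluating a uniformly random matrix on `k` linearly independent vectors gives `k` independent
uniform vectors: prescribing all the values has probability `q ^ (-m k)`. -/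
lemma card_mulVec_family {F : Type*} [Field F] [Fintype F] [DecidableEq F] {m n k : ℕ}
    (w : Fin k → Fin n → F) (hw : LinearIndependent F w) (b : Fin k → Fin m → F) :
    (Finset.univ.filter (fun H : Matrix (Fin m) (Fin n) F => ∀ i, H.mulVec (w i) = b i)).card
      * Fintype.card F ^ (m * k) = Fintype.card F ^ (m * n) := by
  let f : Matrix (Fin m) (Fin n) F →+ (Fin k → Fin m → F) :=
    { toFun := fun H i => H.mulVec (w i)
      map_zero' := by ext; simp
      map_add' := by intro A B; ext; simp [Matrix.add_mulVec] }
  have hf : Function.Surjective f := by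
    intro c
    rw [linearIndependent_iff_injective_fintypeLinearCombination] at hw
    obtain ⟨g, hg⟩ := (Fintype.linearCombination F w).exists_leftInverse_of_injective
      (LinearMap.ker_eq_bot.mpr hw)
    refine ⟨LinearMap.toMatrix' ((Fintype.linearCombination F c) ∘ₗ g), ?_⟩
    ext1 i
    have h1 : w i = Fintype.linearCombination F w (Pi.single i 1) := by simp
    have h2 := LinearMap.congr_fun hg (Pi.single i 1)
    simp only [LinearMap.comp_apply, LinearMap.id_apply] at h2
    change (LinearMap.toMatrix' ((Fintype.linearCombination F c) ∘ₗ g)).mulVec (w i) = c i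
    rw [← Matrix.toLin'_apply, Matrix.toLin'_toMatrix', LinearMap.comp_apply, h1, h2]
    simp
  have h := card_fiber_mul f hf b
  have e1 : Fintype.card (Matrix (Fin m) (Fin n) F) = Fintype.card F ^ (m * n) := by
    rw [← Nat.card_eq_fintype_card, Matrix, Nat.card_eq_fintype_card]
    simp only [Fintype.card_fun, Fintype.card_fin]
    rw [← pow_mul, mul_comm]
  have e2 : Fintype.card (Fin k → Fin m → F) = Fintype.card F ^ (m * k) := by
    simp [pow_mul]
  rw [e1, e2] at h
  rw [← h]
  congr 2
  ext H
  simp [f, funext_iff]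

lemma card_mulVec_one {F : Type*} [Field F] [Fintype F] [DecidableEq F] {m n : ℕ}
    (u : Fin n → F) (hu : u ≠ 0) (b : Fin m → F) :
    (Finset.univ.filter (fun H : Matrix (Fin m) (Fin n) F => H.mulVec u = b)).card
      * Fintype.card F ^ m = Fintype.card F ^ (m * n) := by
  have h := card_mulVec_family (m := m) (fun _ : Fin 1 => u)
    (LinearIndependent.of_subsingleton 0 hu) (fun _ => b)
  simpa using h

/-- Two distinct vectors solving the same nonzero syndrome equation are either never solutions
together, or linearly independent. -/
lemma card_mulVec_two {F : Type*} [Field F] [Fintype F] [DecidableEq F] {m n : ℕ}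
    (u v : Fin n → F) (hu : u ≠ 0) (huv : u ≠ v) (b : Fin m → F) (hb : b ≠ 0) :
    (Finset.univ.filter
        (fun H : Matrix (Fin m) (Fin n) F => H.mulVec u = b ∧ H.mulVec v = b)).card
      * Fintype.card F ^ (m * 2) ≤ Fintype.card F ^ (m * n) := by
  by_cases h : LinearIndependent F ![u, v]
  · have h := card_mulVec_family (m := m) ![u, v] h (fun _ => b)
    simpa using h.le
  · rw [LinearIndependent.pair_iff' hu] at h
    push Not at h
    obtain ⟨a, rfl⟩ := h
    rw [Finset.filter_false_of_mem, Finset.card_empty, zero_mul]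
    · exact Nat.zero_le _
    rintro H - ⟨h1, h2⟩
    rw [Matrix.mulVec_smul, h1] at h2
    have h3 : (a - 1) • b = 0 := by rw [sub_smul, h2, one_smul, sub_self]
    rcases smul_eq_zero.mp h3 with h4 | h4
    · apply huv
      rw [sub_eq_zero.mp h4, one_smul]
    · exact hb h4

/-- First-moment bound: a solution in `T` exists with probability at most the mean number of
solutions. -/
lemma card_exists_le {F : Type*} [Field F] [Fintype F] [DecidableEq F] {m n : ℕ}
    (T : Finset (Fin n → F)) (hT : ∀ u ∈ T, u ≠ 0) (b : Fin m → F) :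
    ((Finset.univ.filter
        (fun H : Matrix (Fin m) (Fin n) F => ∃ u ∈ T, H.mulVec u = b)).card : ℝ)
      / (Fintype.card F : ℝ) ^ (m * n) ≤ T.card / (Fintype.card F : ℝ) ^ m := by
  have hq : (0 : ℝ) < Fintype.card F := by exact_mod_cast Fintype.card_pos
  rw [div_le_div_iff₀ (by positivity) (by positivity)]
  have h : (Finset.univ.filter
        (fun H : Matrix (Fin m) (Fin n) F => ∃ u ∈ T, H.mulVec u = b)).card ≤
      ∑ u ∈ T, (Finset.univ.filter (fun H : Matrix (Fin m) (Fin n) F => H.mulVec u = b)).card := by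
    refine le_trans (Finset.card_le_card ?_) Finset.card_biUnion_le
    intro H hH
    simpa using hH
  have h2 := Nat.mul_le_mul_right (Fintype.card F ^ m) h
  rw [Finset.sum_mul, Finset.sum_congr rfl (fun u hu => card_mulVec_one u (hT u hu) b)] at h2
  simp only [Finset.sum_const, smul_eq_mul] at h2
  exact_mod_cast h2

/-- Second-moment bound: with `μ` the mean number of solutions in `T`, a solution in `T`
exists with probability at least `μ / (1 + μ)`. -/
lemma le_card_exists {F : Type*} [Field F] [Fintype F] [DecidableEq F] {m n : ℕ}
    (T : Finset (Fin n → F)) (hT : ∀ u ∈ T, u ≠ 0) (b : Fin m → F) (hb : b ≠ 0) (μ : ℝ)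
    (hμ : 0 ≤ μ) (hμT : μ = T.card / (Fintype.card F : ℝ) ^ m) :
    μ / (1 + μ) ≤ ((Finset.univ.filter
        (fun H : Matrix (Fin m) (Fin n) F => ∃ u ∈ T, H.mulVec u = b)).card : ℝ)
      / (Fintype.card F : ℝ) ^ (m * n) := by
  classical
  have hq : (0 : ℝ) < Fintype.card F := by exact_mod_cast Fintype.card_pos
  set q : ℝ := (Fintype.card F : ℝ) with hqdef
  set S := Finset.univ.filter
        (fun H : Matrix (Fin m) (Fin n) F => ∃ u ∈ T, H.mulVec u = b) with hS
  let X : Matrix (Fin m) (Fin n) F → ℝ := fun H => ∑ u ∈ T, if H.mulVec u = b then 1 else 0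
  have hX0 : ∀ H ∉ S, X H = 0 := by
    intro H hH
    apply Finset.sum_eq_zero
    intro u hu
    rw [if_neg]
    intro h
    exact hH (by simp only [hS, Finset.mem_filter, Finset.mem_univ, true_and]; exact ⟨u, hu, h⟩)
  have h1 : ∑ H, X H = μ * q ^ (m * n) := by
    rw [Finset.sum_comm]
    have : ∀ u ∈ T, (∑ H : Matrix (Fin m) (Fin n) F, if H.mulVec u = b then (1 : ℝ) else 0)
        = q ^ (m * n) / q ^ m := by
      intro u hu
      rw [Finset.sum_boole, eq_div_iff (by positivity)]
      rw [hqdef]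
      exact_mod_cast card_mulVec_one u (hT u hu) b
    rw [Finset.sum_congr rfl this, hμT]
    simp only [Finset.sum_const, nsmul_eq_mul]
    ring
  have h2 : ∑ H, X H ^ 2 ≤ (μ + μ ^ 2) * q ^ (m * n) := by
    have e : ∀ H, X H ^ 2 = ∑ u ∈ T, ∑ v ∈ T,
        if H.mulVec u = b ∧ H.mulVec v = b then (1 : ℝ) else 0 := by
      intro H
      rw [sq, Finset.sum_mul_sum]
      refine Finset.sum_congr rfl fun u _ => Finset.sum_congr rfl fun v _ => ?_
      by_cases h : H.mulVec u = b <;> by_cases h' : H.mulVec v = b <;> simp [h, h']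
    simp_rw [e]
    rw [Finset.sum_comm]
    have : ∀ u ∈ T, (∑ H : Matrix (Fin m) (Fin n) F, ∑ v ∈ T,
        if H.mulVec u = b ∧ H.mulVec v = b then (1 : ℝ) else 0)
        ≤ q ^ (m * n) / q ^ m + T.card * (q ^ (m * n) / q ^ (m * 2)) := by
      intro u hu
      rw [Finset.sum_comm]
      have hv : ∀ v ∈ T, (∑ H : Matrix (Fin m) (Fin n) F,
          if H.mulVec u = b ∧ H.mulVec v = b then (1 : ℝ) else 0) ≤
          (if v = u then q ^ (m * n) / q ^ m else 0) + q ^ (m * n) / q ^ (m * 2) := by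
        intro v hv
        rw [Finset.sum_boole]
        split_ifs with huv
        · subst huv
          have : (0 : ℝ) ≤ q ^ (m * n) / q ^ (m * 2) := by positivity
          refine le_add_of_le_of_nonneg ?_ this
          rw [le_div_iff₀ (by positivity)]
          simp only [and_self]
          rw [hqdef]
          exact_mod_cast (card_mulVec_one v (hT v hv) b).le
        · rw [zero_add, le_div_iff₀ (by positivity)]
          rw [hqdef]
          exact_mod_cast card_mulVec_two u v (hT u hu) (Ne.symm huv) b hb
      refine (Finset.sum_le_sum hv).trans ?_
      rw [Finset.sum_add_distrib]
      simp [hu]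
    refine (Finset.sum_le_sum this).trans ?_
    simp only [Finset.sum_const, nsmul_eq_mul]
    rw [hμT, pow_mul q m 2]
    apply le_of_eq
    field_simp
  have h3 : (∑ H, X H) ^ 2 ≤ S.card * ∑ H, X H ^ 2 := by
    rw [← Finset.sum_subset (Finset.subset_univ S) (fun H _ h => hX0 H h)]
    refine sq_sum_le_card_mul_sum_sq.trans ?_
    gcongr
    exact Finset.subset_univ S
  rw [h1] at h3
  have h4 := h3.trans (mul_le_mul_of_nonneg_left h2 (Nat.cast_nonneg S.card))
  have hQ : (0 : ℝ) < q ^ (m * n) := by positivity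
  rw [div_le_div_iff₀ (by positivity) hQ]
  rcases hμ.eq_or_lt with h0 | h0
  · rw [← h0]; simp
  · have : (μ * q ^ (m * n)) * (μ * q ^ (m * n)) ≤ (S.card * (1 + μ)) * (μ * q ^ (m * n)) := by
      nlinarith
    exact le_of_mul_le_mul_right this (by positivity)

/-! ### Lattice points in balls -/

/-- Volume of the Euclidean ball of radius `r` in dimension `n`. -/
noncomputable def ballVol (n : ℕ) (r : ℝ) : ℝ :=
  r ^ n * (√Real.pi ^ n / Real.Gamma (n / 2 + 1))

lemma finite_intNorm_le (n : ℕ) (r : ℝ) : {x : Fin n → ℤ | intNorm x ≤ r}.Finite := by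
  refine (Set.finite_Icc (fun _ : Fin n => -⌈r⌉) (fun _ => ⌈r⌉)).subset ?_
  intro x hx
  have h : ∀ i, |x i| ≤ ⌈r⌉ := by
    intro i
    have h1 : |(x i : ℝ)| ≤ intNorm x := by
      apply Real.abs_le_sqrt
      exact Finset.single_le_sum (f := fun i => (x i : ℝ) ^ 2) (fun _ _ => sq_nonneg _)
        (Finset.mem_univ i)
    have h2 := (h1.trans hx).trans (Int.le_ceil r)
    exact_mod_cast h2
  exact ⟨fun i => (abs_le.mp (h i)).1, fun i => (abs_le.mp (h i)).2⟩

/-- Coordinatewise rounding to the integer lattice. -/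
noncomputable def roundVec {n : ℕ} (y : EuclideanSpace ℝ (Fin n)) : Fin n → ℤ :=
  fun i => round (y i)

lemma roundVec_preimage_eq {n : ℕ} (x : Fin n → ℤ) :
    roundVec ⁻¹' {x} = (WithLp.ofLp : EuclideanSpace ℝ (Fin n) → (Fin n → ℝ)) ⁻¹'
      (Set.pi Set.univ fun i => Set.Ico ((x i : ℝ) - 1 / 2) (x i + 1 / 2)) := by
  ext y
  simp only [Set.mem_preimage, Set.mem_singleton_iff, Set.mem_pi, Set.mem_univ, true_implies,
    roundVec, funext_iff, round_eq_iff]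

lemma measurableSet_roundVec_preimage {n : ℕ} (x : Fin n → ℤ) :
    MeasurableSet (roundVec ⁻¹' {x} : Set (EuclideanSpace ℝ (Fin n))) := by
  rw [roundVec_preimage_eq]
  exact (PiLp.volume_preserving_ofLp (Fin n)).measurable
    (MeasurableSet.univ_pi fun i => measurableSet_Ico)

lemma volume_roundVec_preimage {n : ℕ} (x : Fin n → ℤ) :
    MeasureTheory.volume (roundVec ⁻¹' {x} : Set (EuclideanSpace ℝ (Fin n))) = 1 := by
  rw [roundVec_preimage_eq, (PiLp.volume_preserving_ofLp (Fin n)).measure_preimage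
    (MeasurableSet.univ_pi fun i => measurableSet_Ico).nullMeasurableSet, Real.volume_pi_Ico]
  norm_num

lemma intNorm_eq {n : ℕ} (x : Fin n → ℤ) :
    intNorm x = ‖(WithLp.toLp 2 (fun i => (x i : ℝ)) : EuclideanSpace ℝ (Fin n))‖ := by
  simp [intNorm, EuclideanSpace.norm_eq]

lemma norm_sub_roundVec {n : ℕ} (y : EuclideanSpace ℝ (Fin n)) :
    ‖y - WithLp.toLp 2 (fun i => (roundVec y i : ℝ))‖ ≤ √n / 2 := by
  rw [EuclideanSpace.norm_eq]
  apply Real.sqrt_le_iff.mpr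
  refine ⟨by positivity, ?_⟩
  calc ∑ i, ‖(y - WithLp.toLp 2 (fun i => (roundVec y i : ℝ))) i‖ ^ 2
      ≤ ∑ i : Fin n, ((1 : ℝ) / 2) ^ 2 := by
        gcongr with i
        simpa [roundVec] using abs_sub_round (y i)
    _ = (√n / 2) ^ 2 := by
        rw [div_pow (√(n : ℝ)), Real.sq_sqrt (by positivity)]
        simp only [Finset.sum_const, Finset.card_univ, Fintype.card_fin, nsmul_eq_mul]
        ring

lemma volume_biUnion_roundVec {n : ℕ} (T : Finset (Fin n → ℤ)) :
    MeasureTheory.volume (⋃ x ∈ T, (roundVec ⁻¹' {x} : Set (EuclideanSpace ℝ (Fin n))))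
      = T.card := by
  rw [MeasureTheory.measure_biUnion_finset]
  · simp [volume_roundVec_preimage]
  · intro x _ y _ hxy
    exact Disjoint.preimage _ (by simpa using hxy)
  · intro x _
    exact measurableSet_roundVec_preimage x

lemma volume_closedBall_eq {n : ℕ} (hn : 0 < n) {r : ℝ} (hr : 0 ≤ r) :
    MeasureTheory.volume (Metric.closedBall (0 : EuclideanSpace ℝ (Fin n)) r)
      = ENNReal.ofReal (ballVol n r) := by
  have : Nonempty (Fin n) := ⟨⟨0, hn⟩⟩
  rw [EuclideanSpace.volume_closedBall, ← ENNReal.ofReal_pow hr,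
    ← ENNReal.ofReal_mul (by positivity)]
  simp [ballVol]

lemma ballVol_nonneg {n : ℕ} {r : ℝ} (hr : 0 ≤ r) : 0 ≤ ballVol n r := by
  have : 0 < Real.Gamma ((n : ℝ) / 2 + 1) := Real.Gamma_pos_of_pos (by positivity)
  unfold ballVol
  positivity

/-- The unit cubes around the lattice points of a ball lie in the ball enlarged by half the
diagonal of the cube. -/
lemma ncard_le_ballVol {n : ℕ} (hn : 0 < n) {r : ℝ} (hr : 0 ≤ r) :
    ({x : Fin n → ℤ | intNorm x ≤ r}.ncard : ℝ) ≤ ballVol n (r + √n / 2) := by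
  have hr' : 0 ≤ r + √n / 2 := by positivity
  rw [Set.ncard_eq_toFinset_card _ (finite_intNorm_le n r)]
  have h : MeasureTheory.volume (⋃ x ∈ (finite_intNorm_le n r).toFinset,
      (roundVec ⁻¹' {x} : Set (EuclideanSpace ℝ (Fin n)))) ≤
      MeasureTheory.volume (Metric.closedBall (0 : EuclideanSpace ℝ (Fin n)) (r + √n / 2)) := by
    apply MeasureTheory.measure_mono
    intro y hy
    simp only [Set.Finite.mem_toFinset, Set.mem_ofPred_eq, Set.mem_iUnion, Set.mem_preimage,
      Set.mem_singleton_iff, exists_prop, exists_eq_right'] at hy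
    rw [mem_closedBall_zero_iff]
    rw [intNorm_eq] at hy
    have h1 := norm_sub_roundVec y
    have h2 := norm_sub_norm_le y (WithLp.toLp 2 (fun i => (roundVec y i : ℝ)))
    linarith
  rw [volume_biUnion_roundVec, volume_closedBall_eq hn hr'] at h
  rw [← ENNReal.ofReal_natCast] at h
  exact (ENNReal.ofReal_le_ofReal_iff (ballVol_nonneg hr')).mp h

/-- The unit cubes around the lattice points of a ball cover the ball shrunk by half the
diagonal of the cube. -/
lemma ballVol_le_ncard {n : ℕ} (hn : 0 < n) {r : ℝ} (hr : 0 ≤ r - √n / 2) :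
    ballVol n (r - √n / 2) ≤ ({x : Fin n → ℤ | intNorm x ≤ r}.ncard : ℝ) := by
  rw [Set.ncard_eq_toFinset_card _ (finite_intNorm_le n r)]
  have h : MeasureTheory.volume (Metric.closedBall (0 : EuclideanSpace ℝ (Fin n)) (r - √n / 2)) ≤
      MeasureTheory.volume (⋃ x ∈ (finite_intNorm_le n r).toFinset,
      (roundVec ⁻¹' {x} : Set (EuclideanSpace ℝ (Fin n)))) := by
    apply MeasureTheory.measure_mono
    intro y hy
    simp only [Set.Finite.mem_toFinset, Set.mem_ofPred_eq, Set.mem_iUnion, Set.mem_preimage,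
      Set.mem_singleton_iff, exists_prop, exists_eq_right']
    rw [mem_closedBall_zero_iff] at hy
    rw [intNorm_eq]
    have h1 := norm_sub_roundVec y
    have h2 := norm_sub_norm_le (WithLp.toLp 2 (fun i => (roundVec y i : ℝ))) y
    rw [norm_sub_rev] at h2
    linarith
  rw [volume_biUnion_roundVec, volume_closedBall_eq hn hr] at h
  rw [← ENNReal.ofReal_natCast] at h
  exact (ENNReal.ofReal_le_ofReal_iff (by positivity)).mp h

/-- A lattice vector of `ℓ¹` norm at most `L` is a sum of `L` terms from `{0, ±e_i}`. -/
lemma exists_finset_l1 (n L : ℕ) : ∃ S : Finset (Fin n → ℤ), S.card ≤ (2 * n + 1) ^ L ∧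
    ∀ z : Fin n → ℤ, ∑ i, |z i| ≤ L → z ∈ S := by
  classical
  induction L with
  | zero =>
    refine ⟨{0}, by simp, fun z hz => ?_⟩
    rw [Finset.mem_singleton]
    ext i
    have := Finset.single_le_sum (f := fun i => |z i|) (fun _ _ => abs_nonneg _)
      (Finset.mem_univ i)
    have h2 : |z i| ≤ 0 := by simpa using this.trans hz
    simpa using h2
  | succ L ih =>
    obtain ⟨S, hS, hz⟩ := ih
    let D : Finset (Fin n → ℤ) := insert 0 ((Finset.univ : Finset (Fin n × Bool)).image
      (fun a => Pi.single a.1 (if a.2 then 1 else -1)))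
    have hD : D.card ≤ 2 * n + 1 := by
      refine (Finset.card_insert_le _ _).trans ?_
      have := Finset.card_image_le (s := (Finset.univ : Finset (Fin n × Bool)))
        (f := fun a => (Pi.single a.1 (if a.2 then 1 else -1) : Fin n → ℤ))
      simp only [Finset.card_univ, Fintype.card_prod, Fintype.card_fin, Fintype.card_bool] at this
      omega
    refine ⟨(S ×ˢ D).image (fun a => a.1 + a.2), ?_, ?_⟩
    · refine Finset.card_image_le.trans ?_
      rw [Finset.card_product, pow_succ]
      exact Nat.mul_le_mul hS hD
    · intro z hzL
      rw [Finset.mem_image]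
      by_cases h0 : z = 0
      · refine ⟨(0, 0), ?_, by simp [h0]⟩
        rw [Finset.mem_product]
        exact ⟨hz 0 (by simp), Finset.mem_insert_self _ _⟩
      · obtain ⟨i, hi⟩ : ∃ i, z i ≠ 0 := by
          by_contra! h
          exact h0 (funext h)
        have hsum := Finset.add_sum_erase Finset.univ (fun i => |z i|) (Finset.mem_univ i)
        have key : ∀ e : ℤ, |z i - e| = |z i| - 1 →
            z - Pi.single i e ∈ S := by
          intro e he
          apply hz
          rw [← Finset.add_sum_erase Finset.univ _ (Finset.mem_univ i)]
          have : ∑ j ∈ Finset.univ.erase i, |(z - Pi.single i e : Fin n → ℤ) j|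
              = ∑ j ∈ Finset.univ.erase i, |z j| := by
            refine Finset.sum_congr rfl fun j hj => ?_
            simp [Finset.ne_of_mem_erase hj]
          rw [this]
          simp only [Pi.sub_apply, Pi.single_eq_same, he]
          push_cast at hzL
          linarith
        rcases lt_or_gt_of_ne hi with h | h
        · refine ⟨(z - Pi.single i (-1), Pi.single i (-1)), ?_, by simp⟩
          rw [Finset.mem_product]
          refine ⟨key _ ?_, Finset.mem_insert_of_mem (Finset.mem_image.mpr ⟨(i, false), by simp⟩)⟩
          rw [abs_of_neg h, abs_of_nonpos (by omega)]; ring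
        · refine ⟨(z - Pi.single i 1, Pi.single i 1), ?_, by simp⟩
          rw [Finset.mem_product]
          refine ⟨key _ ?_, Finset.mem_insert_of_mem (Finset.mem_image.mpr ⟨(i, true), by simp⟩)⟩
          rw [abs_of_pos h, abs_of_nonneg (by omega)]

/-- Two lattice points of a ball of radius `r` in the same class modulo `q` differ by `q z` with
`‖z‖² ≤ 4 r² / q²`, which bounds the number of points per class. -/
lemma ncard_le_residues {n q : ℕ} [NeZero q] (r : ℝ) (L : ℕ) (hr : 0 ≤ r)
    (hL : 4 * r ^ 2 / (q : ℝ) ^ 2 < L + 1) (T : Finset (Fin n → ZMod q))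
    (hT : ∀ x : Fin n → ℤ, intNorm x ≤ r → (fun j => ((x j : ℤ) : ZMod q)) ∈ T) :
    {x : Fin n → ℤ | intNorm x ≤ r}.ncard ≤ (2 * n + 1) ^ L * T.card := by
  classical
  have hq : (0 : ℝ) < q := by exact_mod_cast Nat.pos_of_ne_zero (NeZero.ne q)
  rw [Set.ncard_eq_toFinset_card _ (finite_intNorm_le n r)]
  refine Finset.card_le_mul_card_image_of_maps_to
    (f := fun x : Fin n → ℤ => (fun j => ((x j : ℤ) : ZMod q))) ?_ _ ?_
  · intro x hx
    exact hT x (by simpa using hx)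
  · intro u _
    obtain ⟨S, hS, hSz⟩ := exists_finset_l1 n L
    rcases Finset.eq_empty_or_nonempty ((finite_intNorm_le n r).toFinset.filter
      (fun x => (fun j => ((x j : ℤ) : ZMod q)) = u)) with h | ⟨x0, h0⟩
    · rw [h]; simp
    refine le_trans ?_ hS
    refine (Finset.card_le_card (t := S.image (fun z => x0 + fun i => (q : ℤ) * z i)) ?_).trans
      Finset.card_image_le
    intro x hx
    simp only [Finset.mem_filter, Set.Finite.mem_toFinset, Set.mem_ofPred_eq] at hx h0
    have hd : ∀ i, ∃ z : ℤ, x i - x0 i = q * z := by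
      intro i
      have h1 := congrFun (hx.2.trans h0.2.symm) i
      have h2 : (((x i - x0 i : ℤ)) : ZMod q) = 0 := by
        push_cast
        rw [sub_eq_zero]; exact h1
      exact (ZMod.intCast_zmod_eq_zero_iff_dvd _ q).mp h2
    choose z hzz using hd
    rw [Finset.mem_image]
    refine ⟨z, hSz z ?_, ?_⟩
    · have hs : ∀ y : Fin n → ℤ, intNorm y ≤ r → ∑ i, (y i : ℝ) ^ 2 ≤ r ^ 2 := by
        intro y hy
        exact (Real.sqrt_le_left hr).mp hy
      have h1 : (q : ℝ) ^ 2 * ∑ i, (z i : ℝ) ^ 2 ≤ 4 * r ^ 2 := by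
        calc (q : ℝ) ^ 2 * ∑ i, (z i : ℝ) ^ 2 = ∑ i, ((x i : ℝ) - x0 i) ^ 2 := by
              rw [Finset.mul_sum]
              refine Finset.sum_congr rfl fun i _ => ?_
              have : (x i : ℝ) - x0 i = q * z i := by exact_mod_cast hzz i
              rw [this]; ring
          _ ≤ ∑ i, (2 * (x i : ℝ) ^ 2 + 2 * (x0 i : ℝ) ^ 2) := by
              gcongr with i
              nlinarith [sq_nonneg ((x i : ℝ) + x0 i)]
          _ ≤ 4 * r ^ 2 := by
              rw [Finset.sum_add_distrib, ← Finset.mul_sum, ← Finset.mul_sum]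
              linarith [hs x hx.1, hs x0 h0.1]
      have h2 : ∑ i, (z i : ℝ) ^ 2 < L + 1 := by
        refine lt_of_le_of_lt ?_ hL
        rw [le_div_iff₀ (by positivity)]
        linarith
      have h3 : ∑ i, (z i) ^ 2 < (L : ℤ) + 1 := by exact_mod_cast h2
      have h4 : ∑ i, |z i| ≤ ∑ i, (z i) ^ 2 := by
        gcongr with i
        rw [← sq_abs]
        rcases (abs_nonneg (z i)).eq_or_lt with h | h
        · rw [← h]; simp
        · nlinarith
      omega
    · ext i
      have := hzz i
      simp only [Pi.add_apply]
      linarith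

/-! ### Volume of the ball of effective radius -/

lemma rpow_div_exp_le_Gamma {s : ℝ} (hs : 0 < s) :
    (s / Real.exp 1) ^ s ≤ Real.Gamma (s + 1) := by
  rw [Real.Gamma_eq_integral (by linarith), add_sub_cancel_right]
  have hint : MeasureTheory.IntegrableOn (fun x : ℝ => Real.exp (-x) * x ^ s) (Set.Ioi 0) := by
    simpa using Real.GammaIntegral_convergent (s := s + 1) (by linarith)
  calc (s / Real.exp 1) ^ s = ∫ x in Set.Ioi s, Real.exp (-x) * s ^ s := by
        rw [MeasureTheory.integral_mul_const, integral_exp_neg_Ioi,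
          Real.div_rpow hs.le (Real.exp_pos _).le, ← Real.exp_mul, one_mul, Real.exp_neg]
        field_simp
    _ ≤ ∫ x in Set.Ioi s, Real.exp (-x) * x ^ s := by
        refine MeasureTheory.setIntegral_mono_on ?_
          (hint.mono_set (Set.Ioi_subset_Ioi hs.le)) measurableSet_Ioi ?_
        · exact (integrableOn_exp_neg_Ioi s).mul_const _
        · intro x hx
          have : s < x := hx
          gcongr
    _ ≤ ∫ x in Set.Ioi 0, Real.exp (-x) * x ^ s := by
        refine MeasureTheory.setIntegral_mono_set hint ?_
          (Set.Ioi_subset_Ioi hs.le).eventuallyLE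
        refine (MeasureTheory.ae_restrict_iff' measurableSet_Ioi).mpr (.of_forall fun x hx => ?_)
        have : (0 : ℝ) < x := hx
        simp only [Pi.zero_apply]
        positivity

/-- Stirling's upper bound up to a polynomial factor, obtained by maximizing `x ^ s * exp (-c x)`
with `c = s / (s + 1)` and integrating the remaining `exp (-(1 - c) x)`. -/
lemma Gamma_le_rpow_div_exp {s : ℝ} (hs : 0 < s) :
    Real.Gamma (s + 1) ≤ Real.exp 1 * (s + 1) * (s / Real.exp 1) ^ s := by
  rw [Real.Gamma_eq_integral (by linarith), add_sub_cancel_right]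
  have hint : MeasureTheory.IntegrableOn (fun x : ℝ => Real.exp (-x) * x ^ s) (Set.Ioi 0) := by
    simpa using Real.GammaIntegral_convergent (s := s + 1) (by linarith)
  have hb : (0 : ℝ) < 1 / (s + 1) := by positivity
  have hpt : ∀ x : ℝ, 0 < x → Real.exp (-x) * x ^ s ≤
      Real.exp (-(1 / (s + 1)) * x) * (((s + 1) / Real.exp 1) ^ s) := by
    intro x hx
    have h1 : x / (s + 1) ≤ Real.exp (x / (s + 1) - 1) := by
      have := Real.add_one_le_exp (x / (s + 1) - 1)
      linarith
    have h2 := Real.rpow_le_rpow (by positivity) h1 hs.le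
    rw [Real.div_rpow hx.le (by positivity), div_le_iff₀ (by positivity), ← Real.exp_mul] at h2
    calc Real.exp (-x) * x ^ s
        ≤ Real.exp (-x) * (Real.exp ((x / (s + 1) - 1) * s) * (s + 1) ^ s) := by gcongr
      _ = _ := by
        rw [Real.div_rpow (by positivity) (Real.exp_pos _).le, ← Real.exp_mul, div_eq_mul_inv (_ ^ s),
          ← Real.exp_neg, mul_comm ((s + 1) ^ s), ← mul_assoc, ← mul_assoc, ← Real.exp_add,
          ← Real.exp_add]
        congr 2
        field_simp
        ring
  have hI : MeasureTheory.IntegrableOn (fun x : ℝ => Real.exp (-(1 / (s + 1)) * x) *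
      (((s + 1) / Real.exp 1) ^ s)) (Set.Ioi 0) :=
    (integrableOn_exp_mul_Ioi (by linarith) 0).mul_const _
  refine (MeasureTheory.setIntegral_mono_on hint hI measurableSet_Ioi
    (fun x hx => hpt x hx)).trans ?_
  rw [MeasureTheory.integral_mul_const, integral_exp_mul_Ioi (by linarith)]
  have h3 : (s + 1) ^ s ≤ Real.exp 1 * s ^ s := by
    have h4 : (s + 1) / s ≤ Real.exp (1 / s) := by
      have := Real.add_one_le_exp (1 / s)
      rw [add_div, div_self hs.ne']
      linarith
    have h5 := Real.rpow_le_rpow (by positivity) h4 hs.le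
    rw [Real.div_rpow (by positivity) hs.le, div_le_iff₀ (by positivity), ← Real.exp_mul,
      one_div, inv_mul_cancel₀ hs.ne'] at h5
    exact h5
  rw [Real.div_rpow (by positivity) (Real.exp_pos _).le,
    Real.div_rpow (by positivity) (Real.exp_pos _).le]
  have h6 : -Real.exp (-(1 / (s + 1)) * 0) / -(1 / (s + 1)) = s + 1 := by
    rw [mul_zero, Real.exp_zero]; field_simp
  rw [h6]
  calc (s + 1) * ((s + 1) ^ s / Real.exp 1 ^ s)
      ≤ (s + 1) * (Real.exp 1 * s ^ s / Real.exp 1 ^ s) := by gcongr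
    _ = _ := by ring

/-- The effective radius makes the volume of the ball equal to `q ^ m` up to the error in
Stirling's formula. -/
lemma ballVol_rhoEff {q n m : ℕ} {R t : ℝ} (hq : 0 < q) (hn : 0 < n)
    (hm : (m : ℝ) = n * (1 - R)) :
    ballVol n (rhoEff q n R * t) = t ^ n * (q : ℝ) ^ m *
      (((n / 2 : ℝ) / Real.exp 1) ^ (n / 2 : ℝ) / Real.Gamma (n / 2 + 1)) := by
  have hq' : (0 : ℝ) < q := by exact_mod_cast hq
  have hn' : (0 : ℝ) < n := by exact_mod_cast hn
  have e1 : ((q : ℝ) ^ (1 - R)) ^ n = (q : ℝ) ^ m := by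
    rw [← Real.rpow_natCast, ← Real.rpow_mul hq'.le, ← Real.rpow_natCast, hm, mul_comm]
  have e2 : ((n / 2 : ℝ) / Real.exp 1) ^ (n / 2 : ℝ) = √(n / 2 / Real.exp 1) ^ n := by
    rw [Real.sqrt_eq_rpow, ← Real.rpow_natCast, ← Real.rpow_mul (by positivity)]
    congr 1; ring
  have e3 : √(n : ℝ) * √Real.pi / √(2 * Real.pi * Real.exp 1) = √(n / 2 / Real.exp 1) := by
    rw [← Real.sqrt_mul hn'.le, ← Real.sqrt_div (by positivity)]
    congr 1
    field_simp
  rw [e2, ← e1, ← e3, ballVol, rhoEff]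
  simp only [mul_pow, div_pow]
  ring

lemma ballVol_rhoEff_le {q n m : ℕ} {R t : ℝ} (hq : 0 < q) (hn : 0 < n) (ht : 0 ≤ t)
    (hm : (m : ℝ) = n * (1 - R)) :
    ballVol n (rhoEff q n R * t) ≤ t ^ n * (q : ℝ) ^ m := by
  have hn' : (0 : ℝ) < n := by exact_mod_cast hn
  rw [ballVol_rhoEff hq hn hm]
  apply mul_le_of_le_one_right (by positivity)
  rw [div_le_one (Real.Gamma_pos_of_pos (by positivity))]
  exact rpow_div_exp_le_Gamma (by positivity)

lemma le_ballVol_rhoEff {q n m : ℕ} {R t : ℝ} (hq : 0 < q) (hn : 0 < n) (ht : 0 ≤ t)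
    (hm : (m : ℝ) = n * (1 - R)) :
    t ^ n * (q : ℝ) ^ m / (Real.exp 1 * (n / 2 + 1)) ≤ ballVol n (rhoEff q n R * t) := by
  have hn' : (0 : ℝ) < n := by exact_mod_cast hn
  rw [ballVol_rhoEff hq hn hm, div_eq_mul_one_div]
  apply mul_le_mul_of_nonneg_left _ (by positivity)
  rw [div_le_div_iff₀ (by positivity) (Real.Gamma_pos_of_pos (by positivity)), one_mul]
  exact (Gamma_le_rpow_div_exp (by positivity)).trans_eq (by ring)

/-! ### Probabilities at a fixed dimension -/

/-- Nonzero residue classes modulo `q` that contain an integer vector of norm at most `r`. -/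
noncomputable def residues (q n : ℕ) [NeZero q] (r : ℝ) : Finset (Fin n → ZMod q) :=
  open Classical in Finset.univ.filter
    (fun u => u ≠ 0 ∧ ∃ x : Fin n → ℤ, intNorm x ≤ r ∧ (fun j => ((x j : ℤ) : ZMod q)) = u)

lemma mem_residues {q n : ℕ} [NeZero q] {r : ℝ} {u : Fin n → ZMod q} :
    u ∈ residues q n r ↔
      u ≠ 0 ∧ ∃ x : Fin n → ℤ, intNorm x ≤ r ∧ (fun j => ((x j : ℤ) : ZMod q)) = u := by
  simp [residues]

/-- Since the syndrome is nonzero, only nonzero residue classes can solve the equation. -/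
lemma ncard_event {q m n : ℕ} [NeZero q] (s : Fin m → ZMod q) (hs : s ≠ 0) (r : ℝ) :
    Set.ncard {H : Matrix (Fin m) (Fin n) (ZMod q) | ∃ x : Fin n → ℤ,
      H.mulVec (fun j => ((x j : ℤ) : ZMod q)) = s ∧ intNorm x ≤ r} =
    (Finset.univ.filter (fun H : Matrix (Fin m) (Fin n) (ZMod q) =>
      ∃ u ∈ residues q n r, H.mulVec u = s)).card := by
  rw [← Set.ncard_coe_finset]
  congr 1
  ext H
  simp only [Set.mem_ofPred_eq, Finset.coe_filter, Finset.mem_univ, true_and, mem_residues]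
  constructor
  · rintro ⟨x, hx, hr⟩
    refine ⟨_, ⟨?_, x, hr, rfl⟩, hx⟩
    intro h0
    rw [h0, Matrix.mulVec_zero] at hx
    exact hs hx.symm
  · rintro ⟨u, ⟨-, x, hr, rfl⟩, hx⟩
    exact ⟨x, hx, hr⟩

lemma card_residues_le {q n : ℕ} [NeZero q] (r : ℝ) :
    (residues q n r).card ≤ {x : Fin n → ℤ | intNorm x ≤ r}.ncard := by
  classical
  rw [Set.ncard_eq_toFinset_card _ (finite_intNorm_le n r)]
  refine (Finset.card_le_card (t := (finite_intNorm_le n r).toFinset.image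
    (fun x j => ((x j : ℤ) : ZMod q))) ?_).trans Finset.card_image_le
  intro u hu
  obtain ⟨-, x, hr, h⟩ := mem_residues.mp hu
  exact Finset.mem_image.mpr ⟨x, by simpa using hr, h⟩

/-- Union bound over the lattice points of the ball. -/
lemma prob_le {q m n : ℕ} [Fact q.Prime] (s : Fin m → ZMod q) (hs : s ≠ 0) (r : ℝ) :
    (Set.ncard {H : Matrix (Fin m) (Fin n) (ZMod q) | ∃ x : Fin n → ℤ,
      H.mulVec (fun j => ((x j : ℤ) : ZMod q)) = s ∧ intNorm x ≤ r} : ℝ) / (q : ℝ) ^ (m * n)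
    ≤ ({x : Fin n → ℤ | intNorm x ≤ r}.ncard : ℝ) / (q : ℝ) ^ m := by
  have h := card_exists_le (residues q n r) (fun u hu => (mem_residues.mp hu).1) s
  rw [ZMod.card] at h
  rw [ncard_event s hs r]
  refine h.trans ?_
  gcongr
  exact card_residues_le r

/-- The second-moment bound in terms of the number of lattice points of the ball, where
`(2 n + 1) ^ L` bounds the number of points per residue class. -/
lemma le_prob {q m n : ℕ} [Fact q.Prime] (s : Fin m → ZMod q) (hs : s ≠ 0) (r : ℝ) (hr : 0 ≤ r)
    (L : ℕ) (hL : 4 * r ^ 2 / (q : ℝ) ^ 2 < L + 1) :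
    1 - (2 * n + 1 : ℝ) ^ L * (q : ℝ) ^ m / ({x : Fin n → ℤ | intNorm x ≤ r}.ncard : ℝ) ≤
    (Set.ncard {H : Matrix (Fin m) (Fin n) (ZMod q) | ∃ x : Fin n → ℤ,
      H.mulVec (fun j => ((x j : ℤ) : ZMod q)) = s ∧ intNorm x ≤ r} : ℝ) / (q : ℝ) ^ (m * n) := by
  classical
  have hq : (1 : ℝ) ≤ q := by exact_mod_cast (Fact.out : q.Prime).one_lt.le
  have h := le_card_exists (residues q n r) (fun u hu => (mem_residues.mp hu).1) s hs _
    (by positivity) rfl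
  rw [ZMod.card] at h
  rw [ncard_event s hs r]
  refine le_trans ?_ h
  have hN := ncard_le_residues r L hr hL (insert 0 (residues q n r)) (by
    intro x hx
    rw [Finset.mem_insert]
    by_cases h0 : (fun j => ((x j : ℤ) : ZMod q)) = 0
    · exact Or.inl h0
    · exact Or.inr (mem_residues.mpr ⟨h0, x, hx, rfl⟩))
  have hN2 := hN.trans (Nat.mul_le_mul_left _ (Finset.card_insert_le _ _))
  have hN3 : ({x : Fin n → ℤ | intNorm x ≤ r}.ncard : ℝ) ≤
      (2 * n + 1 : ℝ) ^ L * ((residues q n r).card + 1) := by exact_mod_cast hN2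
  have hNpos : (0 : ℝ) < ({x : Fin n → ℤ | intNorm x ≤ r}.ncard : ℝ) := by
    have : 0 < {x : Fin n → ℤ | intNorm x ≤ r}.ncard :=
      (Set.ncard_pos (finite_intNorm_le n r)).mpr ⟨0, by simpa [intNorm] using hr⟩
    exact_mod_cast this
  set N : ℝ := ({x : Fin n → ℤ | intNorm x ≤ r}.ncard : ℝ)
  set t : ℝ := ((residues q n r).card : ℝ)
  have ht : 0 ≤ t := Nat.cast_nonneg _
  have hqm : (1 : ℝ) ≤ (q : ℝ) ^ m := one_le_pow₀ hq
  have e : t / (q : ℝ) ^ m / (1 + t / (q : ℝ) ^ m) = 1 - (q : ℝ) ^ m / ((q : ℝ) ^ m + t) := by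
    field_simp
    ring
  rw [e]
  apply sub_le_sub_left
  rw [div_le_div_iff₀ (by positivity) hNpos]
  have : (q : ℝ) ^ m * N ≤ (q : ℝ) ^ m * ((2 * n + 1 : ℝ) ^ L * (t + 1)) := by gcongr
  have h2 : (q : ℝ) ^ m * ((2 * n + 1 : ℝ) ^ L * (t + 1)) ≤
      (q : ℝ) ^ m * ((2 * n + 1 : ℝ) ^ L * ((q : ℝ) ^ m + t)) := by
    gcongr (q : ℝ) ^ m * ((2 * n + 1 : ℝ) ^ L * ?_)
    linarith
  linarith

/-- The hypothesis says that half the diagonal of the unit cube is at most `ρ_eff w / 2`. -/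
lemma half_sqrt_le_rhoEff {q n : ℕ} {R w : ℝ} (hq : 0 < q)
    (hw : √(2 * Real.pi * Real.exp 1) ≤ w * (q : ℝ) ^ (1 - R)) :
    √(n : ℝ) / 2 ≤ rhoEff q n R * (w / 2) := by
  have hq' : (0 : ℝ) < q := by exact_mod_cast hq
  have hc : 0 < √(2 * Real.pi * Real.exp 1) := by positivity
  have : rhoEff q n R * (w / 2) =
      √(n : ℝ) / 2 * (w * (q : ℝ) ^ (1 - R) / √(2 * Real.pi * Real.exp 1)) := by
    unfold rhoEff; ring
  rw [this]
  apply le_mul_of_one_le_right (by positivity)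
  rwa [one_le_div hc]

lemma rhoEff_nonneg (q n : ℕ) (R : ℝ) : 0 ≤ rhoEff q n R := by unfold rhoEff; positivity

lemma ballVol_mono {n : ℕ} {r r' : ℝ} (hr : 0 ≤ r) (h : r ≤ r') : ballVol n r ≤ ballVol n r' := by
  have : 0 < Real.Gamma ((n : ℝ) / 2 + 1) := Real.Gamma_pos_of_pos (by positivity)
  unfold ballVol
  gcongr

lemma prob_lower_radius {q m n : ℕ} [Fact q.Prime] (s : Fin m → ZMod q) (hs : s ≠ 0)
    {R w : ℝ} (hn : 0 < n) (hm : (m : ℝ) = n * (1 - R)) (hw1 : w ≤ 1)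
    (hw : √(2 * Real.pi * Real.exp 1) ≤ w * (q : ℝ) ^ (1 - R)) :
    (Set.ncard {H : Matrix (Fin m) (Fin n) (ZMod q) | ∃ x : Fin n → ℤ,
      H.mulVec (fun j => ((x j : ℤ) : ZMod q)) = s ∧ intNorm x ≤ rhoEff q n R * (1 - w)} : ℝ)
      / (q : ℝ) ^ (m * n) ≤ Real.exp (-(n * w / 2)) := by
  have hq : 0 < q := (Fact.out : q.Prime).pos
  have hq' : (0 : ℝ) < q := by exact_mod_cast hq
  have hρ := rhoEff_nonneg q n R
  have hr : 0 ≤ rhoEff q n R * (1 - w) := mul_nonneg hρ (by linarith)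
  refine (prob_le s hs _).trans ?_
  rw [div_le_iff₀ (by positivity)]
  refine (ncard_le_ballVol hn hr).trans ?_
  have h1 : rhoEff q n R * (1 - w) + √n / 2 ≤ rhoEff q n R * (1 - w / 2) := by
    have := half_sqrt_le_rhoEff (n := n) hq hw
    linarith
  refine (ballVol_mono (by positivity) h1).trans ?_
  refine (ballVol_rhoEff_le hq hn (by linarith) hm).trans ?_
  gcongr
  calc (1 - w / 2) ^ n ≤ Real.exp (-(w / 2)) ^ n := by
        gcongr
        · linarith
        · exact Real.one_sub_le_exp_neg _
    _ = _ := by rw [← Real.exp_nat_mul]; congr 1; ring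

lemma exp_half_le_one_add {x : ℝ} (h0 : 0 ≤ x) (h1 : x ≤ 1) : Real.exp (x / 2) ≤ 1 + x := by
  have h := Real.one_sub_le_exp_neg (x / 2)
  rw [Real.exp_neg, le_inv_comm₀ (by linarith) (Real.exp_pos _)] at h
  refine h.trans ?_
  rw [inv_le_iff_one_le_mul₀ (by linarith)]
  nlinarith

lemma prob_upper_radius {q m n : ℕ} [Fact q.Prime] (s : Fin m → ZMod q) (hs : s ≠ 0)
    {R w A : ℝ} (hn : 0 < n) (hm : (m : ℝ) = n * (1 - R)) (hw0 : 0 ≤ w) (hw1 : w ≤ 1)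
    (hw : √(2 * Real.pi * Real.exp 1) ≤ w * (q : ℝ) ^ (1 - R))
    (hA : 16 * (n : ℝ) ≤ A * (q : ℝ) ^ (2 * R)) :
    1 - Real.exp (A * Real.log (2 * n + 1) + Real.log (Real.exp 1 * (n / 2 + 1)) - n * w / 4) ≤
    (Set.ncard {H : Matrix (Fin m) (Fin n) (ZMod q) | ∃ x : Fin n → ℤ,
      H.mulVec (fun j => ((x j : ℤ) : ZMod q)) = s ∧ intNorm x ≤ rhoEff q n R * (1 + w)} : ℝ)
      / (q : ℝ) ^ (m * n) := by
  have hq : 0 < q := (Fact.out : q.Prime).pos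
  have hq' : (0 : ℝ) < q := by exact_mod_cast hq
  have hn' : (0 : ℝ) < n := by exact_mod_cast hn
  have hρ := rhoEff_nonneg q n R
  have hr : 0 ≤ rhoEff q n R * (1 + w) := by positivity
  have hmult : 4 * (rhoEff q n R * (1 + w)) ^ 2 / (q : ℝ) ^ 2 ≤ A := by
    rw [div_le_iff₀ (by positivity)]
    have h1 : (rhoEff q n R) ^ 2 ≤ n * ((q : ℝ) ^ (1 - R)) ^ 2 := by
      unfold rhoEff
      rw [div_pow, mul_pow, Real.sq_sqrt hn'.le, Real.sq_sqrt (by positivity)]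
      apply div_le_self (by positivity)
      have h3 := Real.pi_gt_three
      have h4 : (1 : ℝ) ≤ Real.exp 1 := Real.one_le_exp (by norm_num)
      nlinarith
    have h2 : (q : ℝ) ^ (2 * R) * ((q : ℝ) ^ (1 - R)) ^ 2 = (q : ℝ) ^ 2 := by
      rw [← Real.rpow_natCast ((q : ℝ) ^ (1 - R)), ← Real.rpow_mul hq'.le,
        ← Real.rpow_add hq', ← Real.rpow_natCast]
      congr 1; push_cast; ring
    calc 4 * (rhoEff q n R * (1 + w)) ^ 2 ≤ 4 * (rhoEff q n R * (1 + 1)) ^ 2 := by gcongr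
      _ = 16 * (rhoEff q n R) ^ 2 := by ring
      _ ≤ 16 * (n * ((q : ℝ) ^ (1 - R)) ^ 2) := by gcongr
      _ = (16 * n) * ((q : ℝ) ^ (1 - R)) ^ 2 := by ring
      _ ≤ (A * (q : ℝ) ^ (2 * R)) * ((q : ℝ) ^ (1 - R)) ^ 2 := by gcongr
      _ = A * (q : ℝ) ^ 2 := by rw [mul_assoc, h2]
  have hA0 : 0 ≤ A := le_trans (by positivity) hmult
  refine le_trans ?_ (le_prob s hs _ hr ⌊A⌋₊ (hmult.trans_lt (Nat.lt_floor_add_one A)))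
  apply sub_le_sub_left
  have hh := half_sqrt_le_rhoEff (n := n) hq hw
  have h1 : rhoEff q n R * (1 + w / 2) ≤ rhoEff q n R * (1 + w) - √n / 2 := by linarith
  have h0 : 0 ≤ rhoEff q n R * (1 + w / 2) := by positivity
  have hV : Real.exp (n * w / 4) * (q : ℝ) ^ m / (Real.exp 1 * (n / 2 + 1)) ≤
      ({x : Fin n → ℤ | intNorm x ≤ rhoEff q n R * (1 + w)}.ncard : ℝ) := by
    refine le_trans ?_ ((ballVol_mono h0 h1).trans (ballVol_le_ncard hn (h0.trans h1)))
    refine le_trans ?_ (le_ballVol_rhoEff hq hn (by linarith) hm)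
    gcongr
    calc Real.exp (n * w / 4) = Real.exp (w / 2 / 2) ^ n := by
          rw [← Real.exp_nat_mul]; congr 1; ring
      _ ≤ (1 + w / 2) ^ n := by
          gcongr
          exact exp_half_le_one_add (by linarith) (by linarith)
  have hpow : (2 * n + 1 : ℝ) ^ ⌊A⌋₊ ≤ Real.exp (A * Real.log (2 * n + 1)) := by
    rw [mul_comm A, ← Real.rpow_def_of_pos (by positivity), ← Real.rpow_natCast]
    exact Real.rpow_le_rpow_of_exponent_le (by linarith) (Nat.floor_le hA0)
  rw [Real.exp_sub, Real.exp_add, Real.exp_log (by positivity)]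
  calc (2 * n + 1 : ℝ) ^ ⌊A⌋₊ * (q : ℝ) ^ m /
        ({x : Fin n → ℤ | intNorm x ≤ rhoEff q n R * (1 + w)}.ncard : ℝ)
      ≤ Real.exp (A * Real.log (2 * n + 1)) * (q : ℝ) ^ m /
        (Real.exp (n * w / 4) * (q : ℝ) ^ m / (Real.exp 1 * (n / 2 + 1))) := by gcongr
    _ = _ := by field_simp

/-! ### Asymptotics -/

lemma ncard_div_le_one {q m n : ℕ} [Fact q.Prime] (S : Set (Matrix (Fin m) (Fin n) (ZMod q))) :
    (S.ncard : ℝ) / (q : ℝ) ^ (m * n) ≤ 1 := by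
  have hq : (0 : ℝ) < q := by exact_mod_cast (Fact.out : q.Prime).pos
  rw [div_le_one (by positivity)]
  have h := Set.ncard_le_ncard (Set.subset_univ S)
  have e : (Set.univ : Set (Matrix (Fin m) (Fin n) (ZMod q))).ncard = q ^ (m * n) := by
    rw [Set.ncard_univ, Matrix, Nat.card_eq_fintype_card]
    simp only [Fintype.card_fun, Fintype.card_fin, ZMod.card]
    rw [← pow_mul, mul_comm]
  rw [e] at h
  exact_mod_cast h

lemma tendsto_natCast_rpow_atTop {b : ℝ} (hb : 0 < b) :
    Tendsto (fun n : ℕ => (n : ℝ) ^ b) atTop atTop :=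
  (tendsto_rpow_atTop hb).comp tendsto_natCast_atTop_atTop

lemma tendsto_rpow_neg_mul_log {b : ℝ} (hb : 0 < b) :
    Tendsto (fun n : ℕ => (n : ℝ) ^ (-b) * Real.log n) atTop (nhds 0) := by
  have h := ((isLittleO_log_rpow_atTop hb).tendsto_div_nhds_zero).comp tendsto_natCast_atTop_atTop
  refine h.congr fun n => ?_
  simp only [Function.comp]
  rw [Real.rpow_neg (Nat.cast_nonneg n)]
  ring

/-- The volume gain `exp (n^(1-ω) / 4)` dominates the polynomial Stirling loss and the
multiplicity `(2n+1)^A` with `A = O(n^(1-2λR))`, because `ω < 1` and `ω < 2λR`. -/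
lemma tendsto_exponent {ω c : ℝ} (h1 : ω < 1) (hc : ω < c) :
    Tendsto (fun n : ℕ => 64 * (n : ℝ) ^ (1 - c) * Real.log (2 * n + 1)
      + Real.log (Real.exp 1 * (n / 2 + 1)) - n * (n : ℝ) ^ (-ω) / 4) atTop atBot := by
  have hb : Tendsto (fun n : ℕ => 128 * ((n : ℝ) ^ (-(c - ω)) * Real.log n)
      + 2 * ((n : ℝ) ^ (-(1 - ω)) * Real.log n) - 1 / 4) atTop
      (nhds (128 * 0 + 2 * 0 - 1 / 4)) :=
    (((tendsto_rpow_neg_mul_log (sub_pos.mpr hc)).const_mul 128).add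
      ((tendsto_rpow_neg_mul_log (sub_pos.mpr h1)).const_mul 2)).sub_const _
  have hlim := (tendsto_natCast_rpow_atTop (sub_pos.mpr h1)).atTop_mul_neg (by norm_num) hb
  refine tendsto_atBot_mono' _ ?_ hlim
  filter_upwards [eventually_ge_atTop 3] with n hn
  have hn3 : (3 : ℝ) ≤ n := by exact_mod_cast hn
  have hn0 : (0 : ℝ) < n := by linarith
  have l1 : Real.log (2 * n + 1) ≤ 2 * Real.log n := by
    rw [← Real.log_rpow hn0]
    apply Real.log_le_log (by positivity)
    rw [Real.rpow_two]; nlinarith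
  have l2 : Real.log (Real.exp 1 * (n / 2 + 1)) ≤ 2 * Real.log n := by
    rw [← Real.log_rpow hn0]
    apply Real.log_le_log (by positivity)
    rw [Real.rpow_two]
    have := Real.exp_one_lt_three
    nlinarith [Real.exp_pos 1]
  have e1 : (n : ℝ) ^ (1 - ω) * (n : ℝ) ^ (-(c - ω)) = (n : ℝ) ^ (1 - c) := by
    rw [← Real.rpow_add hn0]; congr 1; ring
  have e2 : (n : ℝ) ^ (1 - ω) * (n : ℝ) ^ (-(1 - ω)) = 1 := by
    rw [← Real.rpow_add hn0]; simp
  have e3 : n * (n : ℝ) ^ (-ω) = (n : ℝ) ^ (1 - ω) := by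
    rw [sub_eq_add_neg, Real.rpow_add hn0, Real.rpow_one]
  rw [e3]
  calc 64 * (n : ℝ) ^ (1 - c) * Real.log (2 * n + 1)
      + Real.log (Real.exp 1 * (n / 2 + 1)) - (n : ℝ) ^ (1 - ω) / 4
      ≤ 64 * (n : ℝ) ^ (1 - c) * (2 * Real.log n) + 2 * Real.log n - (n : ℝ) ^ (1 - ω) / 4 := by
        gcongr
    _ = 128 * (((n : ℝ) ^ (1 - ω) * (n : ℝ) ^ (-(c - ω))) * Real.log n)
        + 2 * (((n : ℝ) ^ (1 - ω) * (n : ℝ) ^ (-(1 - ω))) * Real.log n)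
        - (n : ℝ) ^ (1 - ω) / 4 := by rw [e1, e2]; ring
    _ = _ := by ring

lemma eventually_le_p {p : ℕ → ℕ} {lam : ℝ}
    (hpn : Tendsto (fun n : ℕ => (p n : ℝ) / (n : ℝ) ^ lam) atTop (nhds 1)) :
    ∀ᶠ n : ℕ in atTop, (n : ℝ) ^ lam / 2 ≤ p n := by
  filter_upwards [hpn.eventually (lt_mem_nhds (show (1 / 2 : ℝ) < 1 by norm_num)),
    eventually_gt_atTop 0] with n h hn
  have hn0 : (0 : ℝ) < n := by exact_mod_cast hn
  rw [lt_div_iff₀ (by positivity)] at h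
  linarith

/-- **Typical norm of a Construction-A constellation point.**  Fix a rational `R ∈ (0,1)`,
`λ > 0` and `ω` with `0 < ω < min{λ(1−R), 2λR, 1}`.  Let `p(n)` be primes with
`p(n)/n^λ → 1`, restrict to `n` with `n(1−R) ∈ ℕ` (i.e. `m n = n(1−R)`), let `H` be a
uniformly random `n(1−R) × n` matrix over `𝔽_{p(n)}` and `s(n)` any nonzero syndrome.
With `ρ_eff(n) = √n·p(n)^{1−R}/√(2πe)`:
(i) the probability that some `x ∈ ℤⁿ` with `‖x‖ ≤ ρ_eff(n)(1−n^{−ω})` has `Hx ≡ s(n)` tends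
to 0; (ii) the probability that some `x ∈ ℤⁿ` with `‖x‖ ≤ ρ_eff(n)(1+n^{−ω})` has
`Hx ≡ s(n)` tends to 1; (iii) consequently, with probability tending to 1, solutions exist
and every minimum-norm solution has norm within `ρ_eff(n)(1 ± n^{−ω})`.
(Probabilities of events over the uniform choice of `H` are expressed as the number of
matrices in the event divided by the total number `p^{n(1−R)·n}` of matrices.) -/
theorem typical_norm_constellation_point
    (R : ℚ) (hR : 0 < R ∧ R < 1) (lam ω : ℝ) (hlam : 0 < lam)
    (hω : 0 < ω ∧ ω < min (lam * (1 - (R : ℝ))) (min (2 * lam * (R : ℝ)) 1))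
    (p : ℕ → ℕ) (hp : ∀ n, (p n).Prime)
    (hpn : Tendsto (fun n : ℕ => (p n : ℝ) / (n : ℝ) ^ lam) atTop (nhds 1))
    (m : ℕ → ℕ)
    (s : (n : ℕ) → Fin (m n) → ZMod (p n)) (hs : ∀ n, s n ≠ 0) :
    (Tendsto
      (fun n : ℕ =>
        (Set.ncard {H : Matrix (Fin (m n)) (Fin n) (ZMod (p n)) |
            ∃ x : Fin n → ℤ,
              H.mulVec (fun j => ((x j : ℤ) : ZMod (p n))) = s n ∧
              intNorm x ≤ rhoEff (p n) n R * (1 - (n : ℝ) ^ (-ω))} : ℝ)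
          / (p n : ℝ) ^ (m n * n))
      (atTop ⊓ Filter.principal {n : ℕ | (m n : ℚ) = (n : ℚ) * (1 - R)}) (nhds 0)) ∧
    (Tendsto
      (fun n : ℕ =>
        (Set.ncard {H : Matrix (Fin (m n)) (Fin n) (ZMod (p n)) |
            ∃ x : Fin n → ℤ,
              H.mulVec (fun j => ((x j : ℤ) : ZMod (p n))) = s n ∧
              intNorm x ≤ rhoEff (p n) n R * (1 + (n : ℝ) ^ (-ω))} : ℝ)
          / (p n : ℝ) ^ (m n * n))
      (atTop ⊓ Filter.principal {n : ℕ | (m n : ℚ) = (n : ℚ) * (1 - R)}) (nhds 1)) ∧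
    (Tendsto
      (fun n : ℕ =>
        (Set.ncard {H : Matrix (Fin (m n)) (Fin n) (ZMod (p n)) |
            (∃ x : Fin n → ℤ, H.mulVec (fun j => ((x j : ℤ) : ZMod (p n))) = s n) ∧
            ∀ x : Fin n → ℤ,
              H.mulVec (fun j => ((x j : ℤ) : ZMod (p n))) = s n →
              (∀ z : Fin n → ℤ,
                H.mulVec (fun j => ((z j : ℤ) : ZMod (p n))) = s n → intNorm x ≤ intNorm z) →
              rhoEff (p n) n R * (1 - (n : ℝ) ^ (-ω)) ≤ intNorm x ∧
                intNorm x ≤ rhoEff (p n) n R * (1 + (n : ℝ) ^ (-ω))} : ℝ)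
          / (p n : ℝ) ^ (m n * n))
      (atTop ⊓ Filter.principal {n : ℕ | (m n : ℚ) = (n : ℚ) * (1 - R)}) (nhds 1)) := by
  obtain ⟨hR0, hR1⟩ := hR
  obtain ⟨hω0, hω1⟩ := hω
  rw [lt_min_iff, lt_min_iff] at hω1
  obtain ⟨hωa, hωb, hωc⟩ := hω1
  have hR0' : (0 : ℝ) < R := by exact_mod_cast hR0
  have hR1' : (R : ℝ) < 1 := by exact_mod_cast hR1
  have hF : ∀ n, Fact (p n).Prime := fun n => ⟨hp n⟩
  have hP := eventually_le_p hpn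
  have hev : ∀ᶠ n : ℕ in atTop ⊓ Filter.principal {n : ℕ | (m n : ℚ) = (n : ℚ) * (1 - R)},
      0 < n ∧ (m n : ℝ) = n * (1 - (R : ℝ)) ∧ (n : ℝ) ^ (-ω) ≤ 1 ∧
      √(2 * Real.pi * Real.exp 1) ≤ (n : ℝ) ^ (-ω) * (p n : ℝ) ^ (1 - (R : ℝ)) ∧
      16 * (n : ℝ) ≤ 64 * (n : ℝ) ^ (1 - 2 * lam * R) * (p n : ℝ) ^ (2 * (R : ℝ)) := by
    rw [eventually_inf_principal]
    filter_upwards [hP, eventually_gt_atTop 0,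
      (tendsto_natCast_rpow_atTop (sub_pos.mpr hωa)).eventually_ge_atTop
        (2 * √(2 * Real.pi * Real.exp 1))] with n h1 hn h2 hmn
    have hn0 : (0 : ℝ) < n := by exact_mod_cast hn
    have hn1 : (1 : ℝ) ≤ n := by exact_mod_cast hn
    -- `p(n) ^ b ≥ (n ^ λ / 2) ^ b` turns both conditions into comparisons of powers of `n`.
    have hpow : ∀ b : ℝ, 0 ≤ b → (n : ℝ) ^ (lam * b) / 2 ^ b ≤ (p n : ℝ) ^ b := by
      intro b hb
      rw [Real.rpow_mul hn0.le, ← Real.div_rpow (by positivity) (by norm_num)]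
      exact Real.rpow_le_rpow (by positivity) h1 hb
    refine ⟨hn, ?_, Real.rpow_le_one_of_one_le_of_nonpos hn1 (by linarith), ?_, ?_⟩
    · have h3 : (m n : ℚ) = (n : ℚ) * (1 - R) := hmn
      exact_mod_cast h3
    · have h3 : (2 : ℝ) ^ (1 - (R : ℝ)) ≤ 2 := by
        calc (2 : ℝ) ^ (1 - (R : ℝ)) ≤ 2 ^ (1 : ℝ) :=
              Real.rpow_le_rpow_of_exponent_le (by norm_num) (by linarith)
          _ = 2 := Real.rpow_one 2
      calc √(2 * Real.pi * Real.exp 1) ≤ (n : ℝ) ^ (lam * (1 - R) - ω) / 2 := by linarith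
        _ = (n : ℝ) ^ (-ω) * ((n : ℝ) ^ (lam * (1 - R)) / 2) := by
            rw [sub_eq_add_neg, Real.rpow_add hn0]; ring
        _ ≤ (n : ℝ) ^ (-ω) * ((n : ℝ) ^ (lam * (1 - R)) / 2 ^ (1 - (R : ℝ))) := by gcongr
        _ ≤ _ := by
            gcongr
            exact hpow _ (by linarith)
    · have h3 : (2 : ℝ) ^ (2 * (R : ℝ)) ≤ 4 := by
        calc (2 : ℝ) ^ (2 * (R : ℝ)) ≤ 2 ^ (2 : ℝ) :=
              Real.rpow_le_rpow_of_exponent_le (by norm_num) (by linarith)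
          _ = 4 := by rw [Real.rpow_two]; norm_num
      calc 16 * (n : ℝ) = 64 * (n : ℝ) ^ (1 - 2 * lam * R) * ((n : ℝ) ^ (lam * (2 * R)) / 4) := by
            have : (n : ℝ) ^ (1 - 2 * lam * R) * (n : ℝ) ^ (lam * (2 * R)) = n := by
              rw [← Real.rpow_add hn0]
              ring_nf
              exact Real.rpow_one _
            linear_combination (-16 : ℝ) * this
        _ ≤ 64 * (n : ℝ) ^ (1 - 2 * lam * R) *
            ((n : ℝ) ^ (lam * (2 * R)) / 2 ^ (2 * (R : ℝ))) := by gcongr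
        _ ≤ _ := by
            gcongr
            exact hpow _ (by linarith)
  have hexp1 : Tendsto (fun n : ℕ => Real.exp (-(n * (n : ℝ) ^ (-ω) / 2))) atTop (nhds 0) := by
    have h1 : Tendsto (fun n : ℕ => (n : ℝ) ^ (1 - ω) / 2) atTop atTop :=
      (tendsto_natCast_rpow_atTop (sub_pos.mpr hωc)).atTop_div_const (by norm_num)
    refine (Real.tendsto_exp_neg_atTop_nhds_zero.comp h1).congr' ?_
    filter_upwards [eventually_gt_atTop 0] with n hn
    have hn0 : (0 : ℝ) < n := by exact_mod_cast hn
    simp only [Function.comp]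
    rw [sub_eq_add_neg, Real.rpow_add hn0, Real.rpow_one]
  have hexp2 := (Real.tendsto_exp_atBot.comp (tendsto_exponent hωc hωb)).const_sub 1
  rw [sub_zero] at hexp2
  have hT1 : Tendsto
      (fun n : ℕ =>
        (Set.ncard {H : Matrix (Fin (m n)) (Fin n) (ZMod (p n)) |
            ∃ x : Fin n → ℤ,
              H.mulVec (fun j => ((x j : ℤ) : ZMod (p n))) = s n ∧
              intNorm x ≤ rhoEff (p n) n R * (1 - (n : ℝ) ^ (-ω))} : ℝ)
          / (p n : ℝ) ^ (m n * n))
      (atTop ⊓ Filter.principal {n : ℕ | (m n : ℚ) = (n : ℚ) * (1 - R)}) (nhds 0) := by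
    refine tendsto_of_tendsto_of_tendsto_of_le_of_le' tendsto_const_nhds
      (hexp1.mono_left inf_le_left) (Eventually.of_forall fun n => by positivity) ?_
    filter_upwards [hev] with n ⟨hn, hm, hw1, hw, _⟩
    have := hF n
    exact prob_lower_radius (s n) (hs n) hn hm hw1 hw
  have hT2 : Tendsto
      (fun n : ℕ =>
        (Set.ncard {H : Matrix (Fin (m n)) (Fin n) (ZMod (p n)) |
            ∃ x : Fin n → ℤ,
              H.mulVec (fun j => ((x j : ℤ) : ZMod (p n))) = s n ∧
              intNorm x ≤ rhoEff (p n) n R * (1 + (n : ℝ) ^ (-ω))} : ℝ)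
          / (p n : ℝ) ^ (m n * n))
      (atTop ⊓ Filter.principal {n : ℕ | (m n : ℚ) = (n : ℚ) * (1 - R)}) (nhds 1) := by
    refine tendsto_of_tendsto_of_tendsto_of_le_of_le' (hexp2.mono_left inf_le_left)
      tendsto_const_nhds ?_ (Eventually.of_forall fun n => ?_)
    · filter_upwards [hev] with n ⟨hn, hm, hw1, hw, hA⟩
      have := hF n
      exact prob_upper_radius (s n) (hs n) hn hm (by positivity) hw1 hw hA
    · have := hF n
      exact ncard_div_le_one _
  refine ⟨hT1, hT2, ?_⟩
  have hdiff := hT2.sub hT1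
  rw [sub_zero] at hdiff
  refine tendsto_of_tendsto_of_tendsto_of_le_of_le hdiff tendsto_const_nhds
    (fun n => ?_) (fun n => ?_)
  · have := hF n
    have hq : (0 : ℝ) < p n := by exact_mod_cast (hp n).pos
    simp only
    rw [← sub_div]
    gcongr
    rw [sub_le_iff_le_add]
    norm_cast
    refine le_trans (Set.ncard_le_ncard ?_) (Set.ncard_union_le _ _)
    -- A short solution exists and none is too short, so minimal solutions have the right norm.
    rintro H ⟨z, hz, hzr⟩
    by_cases h : ∃ x : Fin n → ℤ, H.mulVec (fun j => ((x j : ℤ) : ZMod (p n))) = s n ∧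
        intNorm x ≤ rhoEff (p n) n R * (1 - (n : ℝ) ^ (-ω))
    · exact Or.inr h
    · left
      push Not at h
      exact ⟨⟨z, hz⟩, fun x hx hmin => ⟨(h x hx).le, (hmin z hz).trans hzr⟩⟩
  · have := hF n
    exact ncard_div_le_one _
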